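/- arXiv:1205.3257 — 2 statements merged into one kernel-verified Lean document; each statement's English description precedes it below -/
import Mathlib

section
/- For every d ≥ 1 and every integer m with ⌊(d+2)/2⌋ ≤ m ≤ d, the set of binary forms in ℝ[x,y]_d of real Waring rank exactly m has nonempty interior in the Euclidean topology on coefficients; i.e., every such m is a typical rank. Conversely, no m outside this range is typical: the set of forms of rank m has empty interior if m < ⌊(d+2)/2⌋ or m > d. -/
open MvPolynomial

noncomputable def diffOp (h f : MvPolynomial (Fin 2) ℝ) : MvPolynomial (Fin 2) ℝ :=
  ∑ e ∈ h.support, (MvPolynomial.coeff e h) •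
    ((fun p => pderiv (0 : Fin 2) p)^[e 0] ((fun p => pderiv (1 : Fin 2) p)^[e 1] f))

noncomputable def lin (a b : ℝ) : MvPolynomial (Fin 2) ℝ := a • X 0 + b • X 1

noncomputable def toForm (m : ℕ) (a : Fin (m + 1) → ℝ) : MvPolynomial (Fin 2) ℝ :=
  ∑ i : Fin (m + 1), a i • (X 0 ^ (i : ℕ) * X 1 ^ (m - (i : ℕ)))

def hasWaringDecomp (d r : ℕ) (f : MvPolynomial (Fin 2) ℝ) : Prop :=
  ∃ c a b : Fin r → ℝ, f = ∑ i, c i • (lin (a i) (b i)) ^ d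

noncomputable def waringRank (d : ℕ) (f : MvPolynomial (Fin 2) ℝ) : ℕ :=
  sInf {r | hasWaringDecomp d r f}

/-!
Call a form of rank at most one a *power*; the forms of rank at most `r` are then the `r`-fold
sumset of the cone of powers, and `d + 1` powers suffice for every form.

*Ranks `n + 1` with `(d + 2) / 2 ≤ n + 1 ≤ d`.* By Hermite interpolation, `∑ cᵢ (tᵢ x + y) ^ d`
with `n + 1` terms is a submersion in `(c, t)` wherever the `cᵢ` are nonzero and the `tᵢ` distinct,
so the `(n + 1)`-fold sumset lies in the closure of its interior. If rank `n + 1` were not typical,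
it would lie in the closure of the `n`-fold sumset; adding powers one at a time, so would every
form. But `Re ((i x + y) ^ d)` has a neighbourhood free of forms of rank less than `d`: testing
against polynomials of degree at most `d` vanishing at the nodes `tᵢ` bounds the distance from
below.

*Other ranks.* The `m`-fold sumset has dimension at most `2 m`, hence empty interior if
`2 m < d + 1`. Ranks above `d` are excluded because a generic form is a sum of `d` powers: all
nodes but one can be prescribed, and apolarity determines the last one.
-/

namespace BinaryWaring

open Set
open scoped Pointwise Polynomial

section AdditiveRank

variable {M : Type*} [AddCommMonoid M] {S : Set M} {x : M} {k m n : ℕ}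

/-- The least number of elements of `S` with sum `x`: the rank of `x` with respect to `S`. Here
`r • S` is the `r`-fold sumset `S + ⋯ + S`, not a dilation; the value is `0` if no sumset
contains `x`. -/
noncomputable def additiveRank (S : Set M) (x : M) : ℕ :=
  sInf {r : ℕ | x ∈ r • S}

lemma additiveRank_le (hx : x ∈ n • S) : additiveRank S x ≤ n :=
  Nat.sInf_le hx

lemma mem_additiveRank_nsmul (hx : x ∈ n • S) : x ∈ additiveRank S x • S :=
  Nat.sInf_mem (s := {r : ℕ | x ∈ r • S}) ⟨n, hx⟩

lemma setOf_additiveRank_eq_subset_nsmul (hk : k • S = univ) :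
    {x | additiveRank S x = m} ⊆ m • S := by
  rintro x rfl
  exact mem_additiveRank_nsmul (n := k) (hk ▸ mem_univ x)

variable [TopologicalSpace M]

lemma interior_additiveRank_eq_empty_of_dense (hk : Dense (k • S)) (hm : k < m) :
    interior {x | additiveRank S x = m} = ∅ := by
  by_contra hne
  obtain ⟨x, hx, hxk⟩ :=
    hk.inter_open_nonempty _ isOpen_interior (nonempty_iff_ne_empty.mpr hne)
  have hxm : x ∈ {x | additiveRank S x = m} := interior_subset hx
  exact (additiveRank_le hxk).not_gt (hxm.symm ▸ hm)

lemma interior_diff_closure_subset_additiveRank_eq (hS : 0 ∈ S) :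
    interior ((n + 1) • S) \ closure (n • S) ⊆ {x | additiveRank S x = n + 1} := by
  rintro x ⟨hx, hxn⟩
  have hx' : x ∈ (n + 1) • S := interior_subset hx
  refine (additiveRank_le hx').antisymm (Nat.succ_le_of_lt (lt_of_not_ge fun hle => hxn ?_))
  exact subset_closure (Set.nsmul_subset_nsmul_right hS hle (mem_additiveRank_nsmul hx'))

lemma nsmul_subset_closure_nsmul [ContinuousAdd M] (h : (n + 1) • S ⊆ closure (n • S))
    (hk : n ≤ k) : k • S ⊆ closure (n • S) := by
  induction k, hk using Nat.le_induction with
  | base => exact subset_closure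
  | succ k _ ih =>
    rw [succ_nsmul]
    rintro _ ⟨u, hu, w, hw, rfl⟩
    have huw : u + w ∈ closure ((n + 1) • S) := by
      rw [succ_nsmul]
      exact map_mem_closure (f := (· + w)) (continuous_add_const w) (ih hu) fun v hv =>
        add_mem_add hv hw
    exact closure_minimal h isClosed_closure huw

theorem nonempty_interior_additiveRank_eq [ContinuousAdd M] (hS : 0 ∈ S) (hk : k • S = univ)
    (hint : (n + 1) • S ⊆ closure (interior ((n + 1) • S))) (hn : ¬Dense (n • S)) :
    (interior {x | additiveRank S x = n + 1}).Nonempty := by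
  by_contra hne
  have hnk : n ≤ k := le_of_not_ge fun hkn =>
    hn ((hk ▸ dense_univ : Dense (k • S)).mono (Set.nsmul_subset_nsmul_right hS hkn))
  have hdiff : interior ((n + 1) • S) \ closure (n • S) = ∅ := by
    rw [← subset_empty_iff, ← not_nonempty_iff_eq_empty.mp hne]
    exact interior_maximal (interior_diff_closure_subset_additiveRank_eq hS)
      (isOpen_interior.sdiff isClosed_closure)
  have hstable : (n + 1) • S ⊆ closure (n • S) :=
    hint.trans (closure_minimal (sdiff_eq_empty.mp hdiff) isClosed_closure)
  refine hn (dense_iff_closure_eq.mpr (univ_subset_iff.mp ?_))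
  exact hk ▸ nsmul_subset_closure_nsmul hstable hnk

end AdditiveRank

section Density

lemma dense_setOf_forall_apply_ne_zero {𝕜 E ι : Type*} [NontriviallyNormedField 𝕜]
    [AddCommGroup E] [TopologicalSpace E] [ContinuousAdd E] [BaireSpace E] [Module 𝕜 E]
    [ContinuousSMul 𝕜 E] [Countable ι] {φ : ι → StrongDual 𝕜 E} (hφ : ∀ i, φ i ≠ 0) :
    Dense {x | ∀ i, φ i x ≠ 0} := by
  rw [ofPred_forall]
  refine dense_iInter_of_isOpen (fun i => isOpen_ne_fun (φ i).continuous continuous_const)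
    fun i => ?_
  have hker : interior ((φ i).ker : Set E) = ∅ := by
    by_contra hne
    have htop := (φ i).ker.eq_top_of_nonempty_interior' (nonempty_iff_ne_empty.mpr hne)
    exact hφ i (ContinuousLinearMap.coe_inj.mp (LinearMap.ker_eq_top.mp htop))
  exact interior_eq_empty_iff_dense_compl.mp hker

lemma dense_setOf_injective {𝕜 ι : Type*} [NontriviallyNormedField 𝕜] [CompleteSpace 𝕜]
    [Finite ι] : Dense {t : ι → 𝕜 | Function.Injective t} := by
  classical
  let φ (q : {q : ι × ι // q.1 ≠ q.2}) : StrongDual 𝕜 (ι → 𝕜) :=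
    .proj (φ := fun _ => 𝕜) q.1.1 - .proj (φ := fun _ => 𝕜) q.1.2
  have hφ : ∀ q, φ q ≠ 0 := by
    rintro ⟨⟨i, j⟩, hij⟩ h
    have := DFunLike.congr_fun h (Pi.single i 1)
    simp [φ, Pi.single_eq_of_ne' hij] at this
  have := Fintype.ofFinite ι
  refine (dense_setOf_forall_apply_ne_zero hφ).mono fun t ht i j hij => ?_
  by_contra hne
  exact ht ⟨(i, j), hne⟩ (sub_eq_zero.mpr hij)

lemma dense_setOf_forall_ne_zero {𝕜 ι : Type*} [NontriviallyNormedField 𝕜] :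
    Dense {c : ι → 𝕜 | ∀ i, c i ≠ 0} :=
  (dense_pi univ fun _ _ => dense_compl_singleton (0 : 𝕜)).mono
    fun (c : ι → 𝕜) (hc : c ∈ univ.pi fun _ => {0}ᶜ) i => hc i (mem_univ i)

end Density

section Veronese

variable {K : Type*} [Field K] {d : ℕ}

/-- The coefficient vector of the `d`-th power of the linear form `a x + b y`, with the entry at
`j` belonging to `x ^ j y ^ (d - j)`: a point of the affine cone over the rational normal curve. -/
def veronese (d : ℕ) (a b : K) : Fin (d + 1) → K :=
  fun j => d.choose j * (a ^ (j : ℕ) * b ^ (d - (j : ℕ)))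

lemma veronese_mul_mul (d : ℕ) (r a b : K) :
    veronese d (r * a) (r * b) = r ^ d • veronese d a b := by
  ext j
  have hpow : r ^ d = r ^ (j : ℕ) * r ^ (d - (j : ℕ)) := by
    rw [← pow_add, Nat.add_sub_cancel' j.is_le]
  simp only [veronese, Pi.smul_apply, smul_eq_mul, mul_pow, hpow]
  ring

/-- The apolarity pairing between polynomials and binary forms of degree `d`, the weights
`1 / d.choose j` making the pairing with a `d`-th power an evaluation. Coefficients of degree
above `d` are ignored. -/
noncomputable def apolarPairing (d : ℕ) : K[X] →ₗ[K] Module.Dual K (Fin (d + 1) → K) :=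
  ∑ j : Fin (d + 1), ((d.choose j : K)⁻¹ • Polynomial.lcoeff K j).smulRight (LinearMap.proj j)

lemma apolarPairing_apply (d : ℕ) (p : K[X]) (s : Fin (d + 1) → K) :
    apolarPairing d p s = ∑ j : Fin (d + 1), (d.choose j : K)⁻¹ * p.coeff j * s j := by
  simp [apolarPairing]

variable [CharZero K]

lemma choose_cast_ne_zero (j : Fin (d + 1)) : (d.choose j : K) ≠ 0 :=
  Nat.cast_ne_zero.mpr (Nat.choose_ne_zero j.is_le)

lemma apolarPairing_veronese_one {p : K[X]} (hp : p.natDegree ≤ d) (t : K) :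
    apolarPairing d p (veronese d t 1) = p.eval t := by
  rw [apolarPairing_apply, Polynomial.eval_eq_sum_range' (Nat.lt_succ_of_le hp),
    Finset.sum_range]
  refine Finset.sum_congr rfl fun j _ => ?_
  have := choose_cast_ne_zero (K := K) j
  simp only [veronese, one_pow, mul_one]
  field_simp

lemma apolarPairing_ne_zero {p : K[X]} (hp : p.natDegree ≤ d) (h0 : p ≠ 0) :
    apolarPairing d p ≠ 0 := by
  refine fun h => h0 (Polynomial.funext fun t => ?_)
  rw [← apolarPairing_veronese_one hp, h, LinearMap.zero_apply, Polynomial.eval_zero]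

lemma exists_apolarPairing_eq (f : Module.Dual K (Fin (d + 1) → K)) :
    ∃ p : K[X], p.natDegree ≤ d ∧ apolarPairing d p = f := by
  let q := (Polynomial.degreeLTEquiv K (d + 1)).symm fun j => d.choose j * f (Pi.single j 1)
  have hcoeff (j : Fin (d + 1)) : (q : K[X]).coeff j = d.choose j * f (Pi.single j 1) :=
    congr_fun ((Polynomial.degreeLTEquiv K (d + 1)).apply_symm_apply _) j
  refine ⟨q, ?_, LinearMap.pi_ext' fun i => LinearMap.ext_ring ?_⟩
  · refine Polynomial.natDegree_le_iff_coeff_eq_zero.mpr fun n hn => ?_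
    refine Polynomial.coeff_eq_zero_of_degree_lt ((Polynomial.mem_degreeLT.mp q.2).trans_le ?_)
    exact_mod_cast hn
  · have := choose_cast_ne_zero (K := K) i
    simp only [LinearMap.comp_apply, LinearMap.single_apply, apolarPairing_apply, hcoeff,
      Pi.single_apply, mul_ite, mul_one, mul_zero, Finset.sum_ite_eq', Finset.mem_univ, if_true]
    field_simp

lemma linearIndependent_veronese_one {r : ℕ} (hr : r ≤ d + 1) {t : Fin r → K}
    (ht : Function.Injective t) : LinearIndependent K fun i => veronese d (t i) 1 := by
  rw [Fintype.linearIndependent_iff]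
  intro c hc i
  have hdeg : (Lagrange.basis Finset.univ t i).natDegree ≤ d := by
    rw [Lagrange.natDegree_basis ht.injOn (Finset.mem_univ i), Finset.card_univ, Fintype.card_fin]
    omega
  have heval (j : Fin r) :
      (Lagrange.basis Finset.univ t i).eval (t j) = if j = i then 1 else 0 := by
    split_ifs with h
    · rw [h, Lagrange.eval_basis_self ht.injOn (Finset.mem_univ i)]
    · exact Lagrange.eval_basis_of_ne (Ne.symm h) (Finset.mem_univ j)
  have hpair := congr_arg (apolarPairing d (Lagrange.basis Finset.univ t i)) hc
  simpa [apolarPairing_veronese_one hdeg, heval] using hpair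

lemma span_veronese_one_eq_top {t : Fin (d + 1) → K} (ht : Function.Injective t) :
    Submodule.span K (range fun i => veronese d (t i) 1) = ⊤ :=
  (linearIndependent_veronese_one le_rfl ht).span_eq_top_of_card_eq_finrank' (by simp)

lemma span_veronese_one_eq_ker {t : Fin d → K} (ht : Function.Injective t) :
    Submodule.span K (range fun i => veronese d (t i) 1) =
      (apolarPairing d (Lagrange.nodal Finset.univ t)).ker := by
  have hdeg : (Lagrange.nodal Finset.univ t).natDegree ≤ d := by simp
  refine Submodule.eq_of_le_of_finrank_eq (Submodule.span_le.mpr ?_) ?_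
  · rintro _ ⟨i, rfl⟩
    exact (apolarPairing_veronese_one hdeg _).trans
      (Lagrange.eval_nodal_at_node (Finset.mem_univ i))
  · have hker := Module.Dual.finrank_ker_add_one_of_ne_zero
      (apolarPairing_ne_zero hdeg Lagrange.nodal_ne_zero)
    rw [finrank_span_eq_card (linearIndependent_veronese_one d.le_succ ht)]
    simp only [Module.finrank_fin_fun, Fintype.card_fin] at hker ⊢
    omega

end Veronese

section PowerCone

variable {K : Type*} [Field K] {d r : ℕ}

/-- The coefficient vectors of the scalar multiples of `d`-th powers of linear forms, i.e. of the
forms of Waring rank at most one. -/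
def powerCone (K : Type*) [Field K] (d : ℕ) : Set (Fin (d + 1) → K) :=
  {s | ∃ c a b : K, c • veronese d a b = s}

lemma zero_mem_powerCone : 0 ∈ powerCone K d :=
  ⟨0, 0, 0, zero_smul _ _⟩

lemma mem_nsmul_powerCone {s : Fin (d + 1) → K} :
    s ∈ r • powerCone K d ↔
      ∃ c a b : Fin r → K, ∑ i, c i • veronese d (a i) (b i) = s := by
  have hsum : r • powerCone K d = ∑ _i : Fin r, powerCone K d := by simp
  rw [hsum, Set.mem_fintype_sum]
  constructor
  · rintro ⟨g, hg, rfl⟩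
    choose c a b h using hg
    exact ⟨c, a, b, Finset.sum_congr rfl fun i _ => h i⟩
  · rintro ⟨c, a, b, rfl⟩
    exact ⟨_, fun i => ⟨c i, a i, b i, rfl⟩, rfl⟩

lemma span_veronese_one_subset_nsmul_powerCone (t : Fin r → K) :
    (Submodule.span K (range fun i => veronese d (t i) 1) : Set (Fin (d + 1) → K)) ⊆
      r • powerCone K d := by
  intro s hs
  obtain ⟨c, hc⟩ := (Submodule.mem_span_range_iff_exists_fun K).mp hs
  exact mem_nsmul_powerCone.mpr ⟨c, t, 1, hc⟩

lemma succ_nsmul_powerCone_eq_univ [CharZero K] : (d + 1) • powerCone K d = univ := by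
  have ht : Function.Injective fun i : Fin (d + 1) => ((i : ℕ) : K) :=
    Nat.cast_injective.comp Fin.val_injective
  have hsub := span_veronese_one_subset_nsmul_powerCone (d := d)
    fun i : Fin (d + 1) => ((i : ℕ) : K)
  rwa [span_veronese_one_eq_top ht, Submodule.top_coe, univ_subset_iff] at hsub

/-- With `P` the nodal polynomial of `t`, a form `s` with `⟨P, s⟩ ≠ 0` is apolar to `(X - v) P` for
exactly one `v`, and `⟨(X - t i) P, s⟩ ≠ 0` says that `v` is a new node. -/
lemma mem_nsmul_powerCone_of_apolarPairing_ne_zero [CharZero K] {t : Fin r → K}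
    (ht : Function.Injective t) {s : Fin (r + 1 + 1) → K}
    (h0 : apolarPairing (r + 1) (Lagrange.nodal Finset.univ t) s ≠ 0)
    (h : ∀ i, apolarPairing (r + 1)
      ((Polynomial.X - Polynomial.C (t i)) * Lagrange.nodal Finset.univ t) s ≠ 0) :
    s ∈ (r + 1) • powerCone K (r + 1) := by
  set P := Lagrange.nodal Finset.univ t with hP
  have hlin (v : K) : apolarPairing (r + 1) ((Polynomial.X - Polynomial.C v) * P) s =
      apolarPairing (r + 1) (Polynomial.X * P) s - v * apolarPairing (r + 1) P s := by
    rw [sub_mul, ← Polynomial.smul_eq_C_mul, map_sub, map_smul]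
    rfl
  let v := apolarPairing (r + 1) (Polynomial.X * P) s / apolarPairing (r + 1) P s
  have hv : apolarPairing (r + 1) ((Polynomial.X - Polynomial.C v) * P) s = 0 := by
    rw [hlin, div_mul_cancel₀ _ h0, sub_self]
  have hinj : Function.Injective (Fin.snoc t v : Fin (r + 1) → K) := by
    rw [Fin.snoc_injective_iff]
    refine ⟨ht, ?_⟩
    rintro ⟨i, hi⟩
    exact h i (hi ▸ hv)
  refine span_veronese_one_subset_nsmul_powerCone (Fin.snoc t v : Fin (r + 1) → K) ?_
  have hnodal : Lagrange.nodal Finset.univ (Fin.snoc t v : Fin (r + 1) → K) =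
      (Polynomial.X - Polynomial.C v) * P := by
    simp [hP, Lagrange.nodal, Fin.prod_univ_castSucc, mul_comm]
  rw [SetLike.mem_coe, span_veronese_one_eq_ker hinj, hnodal]
  exact hv

lemma dense_nsmul_powerCone (hd : d ≠ 0) : Dense (d • powerCone ℝ d) := by
  obtain ⟨n, rfl⟩ := Nat.exists_eq_succ_of_ne_zero hd
  let t : Fin n → ℝ := fun i => (i : ℕ)
  have ht : Function.Injective t := Nat.cast_injective.comp Fin.val_injective
  let Q : Option (Fin n) → ℝ[X]
    | none => Lagrange.nodal Finset.univ t
    | some i => (Polynomial.X - Polynomial.C (t i)) * Lagrange.nodal Finset.univ t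
  have hdeg (o) : (Q o).natDegree ≤ n + 1 ∧ Q o ≠ 0 := by
    rcases o with _ | i
    · exact ⟨by simp [Q], Lagrange.nodal_ne_zero⟩
    · refine ⟨Polynomial.natDegree_mul_le.trans ?_,
        mul_ne_zero (Polynomial.X_sub_C_ne_zero _) Lagrange.nodal_ne_zero⟩
      simp [add_comm]
  let φ (o : Option (Fin n)) : StrongDual ℝ (Fin (n + 1 + 1) → ℝ) :=
    (apolarPairing (n + 1) (Q o)).toContinuousLinearMap
  have hφ (o) : φ o ≠ 0 :=
    (map_ne_zero_iff _ LinearMap.toContinuousLinearMap.injective).mpr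
      (apolarPairing_ne_zero (hdeg o).1 (hdeg o).2)
  exact (dense_setOf_forall_apply_ne_zero hφ).mono fun s (hs : ∀ o, φ o s ≠ 0) =>
    mem_nsmul_powerCone_of_apolarPairing_ne_zero ht (hs none) fun i => hs (some i)

end PowerCone

section Dimension

lemma exists_sign_smul_veronese_eq {d : ℕ} (hd : d ≠ 0) (c a b : ℝ) :
    ∃ a' b' : ℝ, c • veronese d a b = (SignType.sign c : ℝ) • veronese d a' b' := by
  refine ⟨|c| ^ (d⁻¹ : ℝ) * a, |c| ^ (d⁻¹ : ℝ) * b, ?_⟩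
  rw [veronese_mul_mul, Real.rpow_inv_natCast_pow (abs_nonneg c) hd, smul_smul, sign_mul_abs]

lemma contDiff_veronese {n : WithTop ℕ∞} (d : ℕ) :
    ContDiff ℝ n fun x : ℝ × ℝ => veronese d x.1 x.2 := by
  unfold veronese
  fun_prop

/-- Absorbing the positive scalars into the linear forms leaves finitely many sign patterns, each
with `2 r` parameters. -/
lemma dimH_nsmul_powerCone_le {d : ℕ} (hd : d ≠ 0) (r : ℕ) :
    dimH (r • powerCone ℝ d) ≤ (2 * r : ℕ) := by
  let F (ε : Fin r → SignType) (x : Fin r → ℝ × ℝ) : Fin (d + 1) → ℝ :=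
    ∑ i, (ε i : ℝ) • veronese d (x i).1 (x i).2
  have hF (ε) : ContDiff ℝ 1 (F ε) :=
    ContDiff.sum fun i _ => ((contDiff_veronese d).comp (contDiff_apply ℝ (ℝ × ℝ) i)).const_smul _
  have hsub : r • powerCone ℝ d ⊆ ⋃ ε, range (F ε) := by
    intro s hs
    obtain ⟨c, a, b, rfl⟩ := mem_nsmul_powerCone.mp hs
    choose a' b' h using fun i => exists_sign_smul_veronese_eq hd (c i) (a i) (b i)
    exact mem_iUnion.mpr ⟨fun i => SignType.sign (c i), fun i => (a' i, b' i),
      Finset.sum_congr rfl fun i _ => (h i).symm⟩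
  refine (dimH_mono hsub).trans ?_
  rw [dimH_iUnion]
  refine iSup_le fun ε => (hF ε).dimH_range_le.trans ?_
  rw [Module.finrank_pi_fintype]
  simp [mul_comm]

lemma interior_nsmul_powerCone_eq_empty {d r : ℕ} (hd : d ≠ 0) (hr : 2 * r ≤ d) :
    interior (r • powerCone ℝ d) = ∅ := by
  refine interior_eq_empty_iff_dense_compl.mpr (dense_compl_of_dimH_lt_finrank ?_)
  refine (dimH_nsmul_powerCone_le hd r).trans_lt ?_
  rw [Module.finrank_fin_fun]
  exact_mod_cast Nat.lt_succ_of_le hr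

end Dimension

section Hermite

lemma eq_zero_of_eval_eq_zero_of_eval_derivative_eq_zero {K ι : Type*} [Field K] [Fintype ι]
    {t : ι → K} (ht : Function.Injective t) {p : K[X]} (hp : p.natDegree < 2 * Fintype.card ι)
    (h : ∀ i, p.eval (t i) = 0) (h' : ∀ i, p.derivative.eval (t i) = 0) : p = 0 := by
  by_contra hp0
  have hdvd : ∏ i, (Polynomial.X - Polynomial.C (t i)) ^ 2 ∣ p := by
    refine Finset.prod_dvd_of_coprime
      (fun i _ j _ hij => (Polynomial.pairwise_coprime_X_sub_C ht hij).pow) fun i _ => ?_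
    rw [← Polynomial.le_rootMultiplicity_iff hp0]
    exact (Polynomial.one_lt_rootMultiplicity_iff_isRoot hp0).mpr ⟨h i, h' i⟩
  have hdeg : (∏ i, (Polynomial.X - Polynomial.C (t i)) ^ 2).natDegree = 2 * Fintype.card ι := by
    simp [Finset.prod_pow, Polynomial.natDegree_pow]
  exact (Polynomial.natDegree_le_of_dvd hdvd hp0).not_gt (hdeg.symm ▸ hp)

end Hermite

section AffinePowerSum

/-- The derivative of `t ↦ veronese d t 1`, a tangent vector of the rational normal curve. -/
def veroneseTangent {K : Type*} [Field K] (d : ℕ) (t : K) : Fin (d + 1) → K :=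
  fun j => d.choose j * (j * t ^ ((j : ℕ) - 1))

lemma apolarPairing_veroneseTangent {K : Type*} [Field K] [CharZero K] {d : ℕ} {p : K[X]}
    (hp : p.natDegree ≤ d) (t : K) :
    apolarPairing d p (veroneseTangent d t) = p.derivative.eval t := by
  rw [apolarPairing_apply, Polynomial.derivative_eval,
    Polynomial.sum_over_range' _ (by simp) _ (Nat.lt_succ_of_le hp), Finset.sum_range]
  refine Finset.sum_congr rfl fun j _ => ?_
  have := choose_cast_ne_zero (K := K) j
  simp only [veroneseTangent]
  field_simp

lemma hasStrictDerivAt_veronese_one (d : ℕ) (t : ℝ) :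
    HasStrictDerivAt (fun u => veronese d u 1) (veroneseTangent d t) t := by
  refine hasStrictDerivAt_pi.mpr fun j => ?_
  simpa [veronese, veroneseTangent] using
    (hasStrictDerivAt_pow (j : ℕ) t).const_mul (d.choose j : ℝ)

variable {ι : Type*} [Fintype ι] {d : ℕ}

/-- The sum of `d`-th powers `∑ i, c i (t i x + y) ^ d`, as a function of `(c, t)`. Leaving out the
linear forms proportional to `x` avoids the redundant parameter of `c (a x + b y) ^ d`. -/
noncomputable def affinePowerSum (d : ℕ) (x : (ι → ℝ) × (ι → ℝ)) : Fin (d + 1) → ℝ :=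
  ∑ i, x.1 i • veronese d (x.2 i) 1

lemma continuous_affinePowerSum :
    Continuous (affinePowerSum d : (ι → ℝ) × (ι → ℝ) → Fin (d + 1) → ℝ) := by
  unfold affinePowerSum veronese
  fun_prop

lemma apolarPairing_affinePowerSum {p : ℝ[X]} (hp : p.natDegree ≤ d) (c t : ι → ℝ) :
    apolarPairing d p (affinePowerSum d (c, t)) = ∑ i, c i * p.eval (t i) := by
  simp only [affinePowerSum, map_sum, map_smul, apolarPairing_veronese_one hp, smul_eq_mul]

/-- The differential of `affinePowerSum d` at `(c, t)`. -/
noncomputable def affinePowerSumDeriv (d : ℕ) (c t : ι → ℝ) :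
    (ι → ℝ) × (ι → ℝ) →L[ℝ] (Fin (d + 1) → ℝ) :=
  ∑ i, (c i • (((ContinuousLinearMap.proj i).comp (.snd ℝ _ _)).smulRight
      (veroneseTangent d (t i))) +
    ((ContinuousLinearMap.proj i).comp (.fst ℝ _ _)).smulRight (veronese d (t i) 1))

lemma affinePowerSumDeriv_apply (c t u v : ι → ℝ) :
    affinePowerSumDeriv d c t (u, v) =
      ∑ i, (c i • v i • veroneseTangent d (t i) + u i • veronese d (t i) 1) := by
  simp [affinePowerSumDeriv]

lemma hasStrictFDerivAt_affinePowerSum (c t : ι → ℝ) :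
    HasStrictFDerivAt (affinePowerSum d) (affinePowerSumDeriv d c t) (c, t) := by
  refine HasStrictFDerivAt.fun_sum fun i _ => ?_
  have hc : HasStrictFDerivAt (fun x : (ι → ℝ) × (ι → ℝ) => x.1 i)
      ((ContinuousLinearMap.proj i).comp (.fst ℝ _ _)) (c, t) :=
    hasStrictFDerivAt_pi'.mp hasStrictFDerivAt_fst i
  have ht : HasStrictFDerivAt (fun x : (ι → ℝ) × (ι → ℝ) => x.2 i)
      ((ContinuousLinearMap.proj i).comp (.snd ℝ _ _)) (c, t) :=
    hasStrictFDerivAt_pi'.mp hasStrictFDerivAt_snd i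
  have hv : HasStrictFDerivAt (fun x : (ι → ℝ) × (ι → ℝ) => veronese d (x.2 i) 1)
      (((ContinuousLinearMap.proj i).comp (.snd ℝ _ _)).smulRight (veroneseTangent d (t i)))
      (c, t) :=
    ((hasStrictDerivAt_veronese_one d (t i)).hasStrictFDerivAt.comp (c, t) ht).congr_fderiv
      (by ext <;> simp)
  exact hc.smul hv

lemma range_affinePowerSumDeriv_eq_top (hd : d + 1 ≤ 2 * Fintype.card ι) {c t : ι → ℝ}
    (hc : ∀ i, c i ≠ 0) (ht : Function.Injective t) :
    (affinePowerSumDeriv d c t).range = ⊤ := by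
  classical
  by_contra hne
  obtain ⟨f, hf0, hf⟩ := Submodule.exists_le_ker_of_lt_top _ (lt_top_iff_ne_top.mpr hne)
  obtain ⟨p, hp, rfl⟩ := exists_apolarPairing_eq f
  have hzero (u v : ι → ℝ) :
      ∑ i, (c i * (v i * p.derivative.eval (t i)) + u i * p.eval (t i)) = 0 := by
    have := hf (LinearMap.mem_range_self _ (u, v))
    simpa [affinePowerSumDeriv_apply, apolarPairing_veronese_one hp,
      apolarPairing_veroneseTangent hp] using this
  refine hf0 ?_
  rw [eq_zero_of_eval_eq_zero_of_eval_derivative_eq_zero ht (p := p) (by omega)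
    (fun i => ?_) fun i => ?_, map_zero]
  · simpa [Pi.single_apply] using hzero (Pi.single i 1) 0
  · simpa [Pi.single_apply, hc i] using hzero 0 (Pi.single i 1)

lemma affinePowerSum_mem_interior_range (hd : d + 1 ≤ 2 * Fintype.card ι) {c t : ι → ℝ}
    (hc : ∀ i, c i ≠ 0) (ht : Function.Injective t) :
    affinePowerSum d (c, t) ∈
      interior (range (affinePowerSum d : (ι → ℝ) × (ι → ℝ) → Fin (d + 1) → ℝ)) := by
  rw [mem_interior_iff_mem_nhds, ← (hasStrictFDerivAt_affinePowerSum c t).map_nhds_eq_of_surj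
    (range_affinePowerSumDeriv_eq_top hd hc ht)]
  exact Filter.range_mem_map

lemma range_affinePowerSum_subset_closure_interior (hd : d + 1 ≤ 2 * Fintype.card ι) :
    range (affinePowerSum d : (ι → ℝ) × (ι → ℝ) → Fin (d + 1) → ℝ) ⊆
      closure (interior (range (affinePowerSum d : (ι → ℝ) × (ι → ℝ) → Fin (d + 1) → ℝ))) := by
  rintro _ ⟨x, rfl⟩
  exact map_mem_closure continuous_affinePowerSum
    ((dense_setOf_forall_ne_zero.prod dense_setOf_injective) x)
    fun y hy => affinePowerSum_mem_interior_range hd hy.1 hy.2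

lemma range_affinePowerSum_subset_nsmul_powerCone {r : ℕ} :
    range (affinePowerSum d : (Fin r → ℝ) × (Fin r → ℝ) → Fin (d + 1) → ℝ) ⊆
      r • powerCone ℝ d := by
  rintro _ ⟨x, rfl⟩
  exact mem_nsmul_powerCone.mpr ⟨x.1, x.2, 1, rfl⟩

lemma nsmul_powerCone_subset_closure_range_affinePowerSum {r : ℕ} :
    r • powerCone ℝ d ⊆
      closure (range (affinePowerSum d : (Fin r → ℝ) × (Fin r → ℝ) → Fin (d + 1) → ℝ)) := by
  intro s hs
  obtain ⟨c, a, b, rfl⟩ := mem_nsmul_powerCone.mp hs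
  have hcont : Continuous fun b : Fin r → ℝ => ∑ i, c i • veronese d (a i) (b i) := by
    unfold veronese
    fun_prop
  refine map_mem_closure (f := fun b : Fin r → ℝ => ∑ i, c i • veronese d (a i) (b i)) hcont
    (dense_setOf_forall_ne_zero b) fun b (hb : ∀ i, b i ≠ 0) => ?_
  refine ⟨(fun i => c i * b i ^ d, fun i => a i / b i), Finset.sum_congr rfl fun i _ => ?_⟩
  rw [mul_smul, ← veronese_mul_mul, mul_div_cancel₀ _ (hb i), mul_one]

lemma nsmul_powerCone_subset_closure_interior {r : ℕ} (hd : d + 1 ≤ 2 * r) :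
    r • powerCone ℝ d ⊆ closure (interior (r • powerCone ℝ d)) := by
  have hrange := range_affinePowerSum_subset_closure_interior (d := d) (ι := Fin r) (by simpa)
  refine nsmul_powerCone_subset_closure_range_affinePowerSum.trans
    (closure_minimal (hrange.trans ?_) isClosed_closure)
  exact closure_mono (interior_mono range_affinePowerSum_subset_nsmul_powerCone)

end AffinePowerSum

section NotDense

lemma abs_re_add_abs_im_le (z : ℂ) : |z.re| + |z.im| ≤ √2 * ‖z‖ := by
  rw [Complex.norm_def, ← Real.sqrt_mul zero_le_two, Complex.normSq_apply]
  refine Real.le_sqrt_of_sq_le ?_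
  nlinarith [sq_nonneg (|z.re| - |z.im|), sq_abs z.re, sq_abs z.im]

lemma abs_apply_prod_le {ι : Type*} (s : Finset ι) (e : Module.Dual ℝ ℝ[X]) {δ : ℝ}
    (he : ∀ n, |e (Polynomial.X ^ n)| ≤ δ) (u v : ι → ℝ) :
    |e (∏ i ∈ s, (Polynomial.C (u i) * Polynomial.X + Polynomial.C (v i)))| ≤
      δ * ∏ i ∈ s, (|u i| + |v i|) := by
  classical
  rw [Finset.prod_add, Finset.prod_add, map_sum, Finset.mul_sum]
  refine (Finset.abs_sum_le_sum_abs _ _).trans (Finset.sum_le_sum fun A _ => ?_)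
  have hterm : (∏ i ∈ A, Polynomial.C (u i) * Polynomial.X) * ∏ i ∈ s \ A, Polynomial.C (v i) =
      ((∏ i ∈ A, u i) * ∏ i ∈ s \ A, v i) • (Polynomial.X ^ A.card : ℝ[X]) := by
    rw [Finset.prod_mul_distrib, Finset.prod_const, Polynomial.smul_eq_C_mul, map_mul, map_prod,
      map_prod]
    ring
  rw [hterm, map_smul, smul_eq_mul, abs_mul, abs_mul, Finset.abs_prod, Finset.abs_prod, mul_comm]
  gcongr
  exact he _

lemma abs_apply_prod_le_norm_aeval_I {ι : Type*} [Fintype ι] (e : Module.Dual ℝ ℝ[X]) {δ : ℝ}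
    (he : ∀ n, |e (Polynomial.X ^ n)| ≤ δ) (u v : ι → ℝ) :
    |e (∏ i, (Polynomial.C (u i) * Polynomial.X + Polynomial.C (v i)))| ≤
      δ * (√2 ^ Fintype.card ι *
        ‖Polynomial.aeval Complex.I
          (∏ i, (Polynomial.C (u i) * Polynomial.X + Polynomial.C (v i)))‖) := by
  have hδ : 0 ≤ δ := (abs_nonneg _).trans (he 0)
  have hfactor (i : ι) : |u i| + |v i| ≤ √2 *
      ‖Polynomial.aeval Complex.I (Polynomial.C (u i) * Polynomial.X + Polynomial.C (v i))‖ := by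
    simpa [add_comm] using abs_re_add_abs_im_le (u i * Complex.I + v i)
  refine (abs_apply_prod_le Finset.univ e he u v).trans (mul_le_mul_of_nonneg_left ?_ hδ)
  rw [map_prod, norm_prod, ← Finset.card_univ, ← Finset.prod_const, ← Finset.prod_mul_distrib]
  exact Finset.prod_le_prod (fun i _ => by positivity) fun i _ => hfactor i

/-- The coefficient vector of `Re ((i x + y) ^ d)`, a form with `d` distinct real roots. -/
noncomputable def rePowI (d : ℕ) : Fin (d + 1) → ℝ :=
  fun j => d.choose j * (Complex.I ^ (j : ℕ)).re

variable {d : ℕ}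

lemma apolarPairing_rePowI {p : ℝ[X]} (hp : p.natDegree ≤ d) :
    apolarPairing d p (rePowI d) = (Polynomial.aeval Complex.I p).re := by
  rw [apolarPairing_apply, Polynomial.aeval_eq_sum_range' (Nat.lt_succ_of_le hp), Complex.re_sum,
    Finset.sum_range]
  refine Finset.sum_congr rfl fun j _ => ?_
  have := choose_cast_ne_zero (K := ℝ) j
  rw [rePowI, Complex.smul_re, smul_eq_mul]
  field_simp

lemma abs_apolarPairing_X_pow_le (s : Fin (d + 1) → ℝ) (n : ℕ) :
    |apolarPairing d (Polynomial.X ^ n) s| ≤ ‖s‖ := by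
  rcases lt_or_ge d n with hn | hn
  · have (j : Fin (d + 1)) : (j : ℕ) ≠ n := by omega
    simp [apolarPairing_apply, Polynomial.coeff_X_pow, this]
  · lift n to Fin (d + 1) using Nat.lt_succ_of_le hn
    have hchoose : (1 : ℝ) ≤ d.choose n := by
      exact_mod_cast Nat.choose_pos n.is_le
    have hval : apolarPairing d (Polynomial.X ^ (n : ℕ)) s = (d.choose n : ℝ)⁻¹ * s n := by
      simp [apolarPairing_apply, Polynomial.coeff_X_pow, Fin.val_inj]
    rw [hval, abs_mul, abs_of_nonneg (by positivity)]
    exact (mul_le_of_le_one_left (abs_nonneg _) (inv_le_one_of_one_le₀ hchoose)).trans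
      (norm_le_pi_norm s n)

/-- Pair with `l P`, where `P` vanishes at the nodes of the power sum and the linear factor `l`
makes `(l P)(i)` the positive number `|P(i)|²`. -/
lemma one_le_norm_rePowI_sub_affinePowerSum {n : ℕ} (hn : n < d) (c t : Fin n → ℝ) :
    1 ≤ √2 ^ (n + 1) * ‖rePowI d - affinePowerSum d (c, t)‖ := by
  let z : ℂ := Polynomial.aeval Complex.I (Lagrange.nodal Finset.univ t)
  let u : Option (Fin n) → ℝ := fun o => o.elim (-z.im) 1
  let v : Option (Fin n) → ℝ := fun o => o.elim z.re fun i => -t i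
  let Q : ℝ[X] := ∏ o, (Polynomial.C (u o) * Polynomial.X + Polynomial.C (v o))
  have hQ : Q = (Polynomial.C (-z.im) * Polynomial.X + Polynomial.C z.re) *
      Lagrange.nodal Finset.univ t := by
    simp [Q, u, v, Fintype.prod_option, Lagrange.nodal, sub_eq_add_neg]
  have hdeg : Q.natDegree ≤ d := by
    have := Polynomial.natDegree_mul_le_of_le (Polynomial.natDegree_linear_le (a := -z.im)
      (b := z.re)) (Lagrange.natDegree_nodal (s := Finset.univ) (v := t)).le
    rw [← hQ, Finset.card_univ, Fintype.card_fin] at this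
    omega
  have haeval : Polynomial.aeval Complex.I Q = (Complex.normSq z : ℂ) := by
    rw [hQ, map_mul, ← Complex.mul_conj, mul_comm]
    congr 1
    apply Complex.ext <;> simp
  have hz : 0 < Complex.normSq z := by
    refine Complex.normSq_pos.mpr ?_
    simp only [z, Lagrange.nodal, map_prod]
    refine Finset.prod_ne_zero_iff.mpr fun i _ h => ?_
    simpa using congr_arg Complex.im h
  have hpair : apolarPairing d Q (rePowI d - affinePowerSum d (c, t)) = Complex.normSq z := by
    rw [map_sub, apolarPairing_rePowI hdeg, haeval, Complex.ofReal_re,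
      apolarPairing_affinePowerSum hdeg]
    simp [hQ, Lagrange.eval_nodal_at_node]
  have hle := abs_apply_prod_le_norm_aeval_I
    ((apolarPairing d).flip (rePowI d - affinePowerSum d (c, t)))
    (fun m => abs_apolarPairing_X_pow_le _ m) u v
  change |apolarPairing d Q _| ≤ _ * (_ * ‖Polynomial.aeval Complex.I Q‖) at hle
  rw [hpair, haeval, Complex.norm_real, Real.norm_eq_abs, abs_of_pos hz, Fintype.card_option,
    Fintype.card_fin] at hle
  refine le_of_mul_le_mul_right ?_ hz
  linarith

lemma not_dense_nsmul_powerCone {n : ℕ} (hn : n < d) : ¬Dense (n • powerCone ℝ d) := by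
  intro hdense
  have hrange : Dense (range (affinePowerSum d : (Fin n → ℝ) × (Fin n → ℝ) → _)) :=
    dense_closure.mp (hdense.mono nsmul_powerCone_subset_closure_range_affinePowerSum)
  obtain ⟨_, ⟨⟨c, t⟩, rfl⟩, hdist⟩ :=
    hrange.exists_dist_lt (rePowI d) (ε := (√2 ^ (n + 1))⁻¹) (by positivity)
  rw [dist_eq_norm, ← one_div, lt_div_iff₀' (by positivity)] at hdist
  exact (one_le_norm_rePowI_sub_affinePowerSum hn c t).not_gt hdist

end NotDense

section Forms

variable {d r : ℕ}

lemma coeff_toForm (s : Fin (d + 1) → ℝ) (j : Fin (d + 1)) :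
    coeff (Finsupp.single 0 (j : ℕ) + Finsupp.single 1 (d - j : ℕ)) (toForm d s) = s j := by
  have hterm (i : Fin (d + 1)) : (MvPolynomial.X 0 ^ (i : ℕ) * MvPolynomial.X 1 ^ (d - i : ℕ) :
      MvPolynomial (Fin 2) ℝ) =
        monomial (Finsupp.single 0 (i : ℕ) + Finsupp.single 1 (d - i : ℕ)) 1 := by
    rw [X_pow_eq_monomial, X_pow_eq_monomial, monomial_mul, one_mul]
  have hexp (i : Fin (d + 1)) : Finsupp.single (0 : Fin 2) (i : ℕ) + Finsupp.single 1 (d - i : ℕ) =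
      Finsupp.single 0 (j : ℕ) + Finsupp.single 1 (d - j : ℕ) ↔ i = j := by
    refine ⟨fun h => Fin.ext ?_, fun h => h ▸ rfl⟩
    simpa using DFunLike.congr_fun h 0
  simp only [toForm, hterm, coeff_sum, coeff_smul, coeff_monomial, hexp, smul_eq_mul, mul_ite,
    mul_one, mul_zero, Finset.sum_ite_eq', Finset.mem_univ, if_true]

lemma toForm_injective : Function.Injective (toForm d) := fun s s' h =>
  funext fun j => by rw [← coeff_toForm s, h, coeff_toForm]

lemma toForm_sum_smul (c : Fin r → ℝ) (s : Fin r → Fin (d + 1) → ℝ) :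
    toForm d (∑ i, c i • s i) = ∑ i, c i • toForm d (s i) := by
  simp only [toForm, Finset.sum_apply, Pi.smul_apply, Finset.sum_smul, Finset.smul_sum, smul_assoc]
  exact Finset.sum_comm

lemma toForm_veronese (a b : ℝ) : toForm d (veronese d a b) = lin a b ^ d := by
  rw [lin, add_pow, Finset.sum_range]
  refine Finset.sum_congr rfl fun j _ => ?_
  simp only [veronese, smul_eq_C_mul, map_mul, map_pow, map_natCast]
  ring

lemma hasWaringDecomp_toForm_iff {s : Fin (d + 1) → ℝ} :
    hasWaringDecomp d r (toForm d s) ↔ s ∈ r • powerCone ℝ d := by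
  simp only [hasWaringDecomp, mem_nsmul_powerCone, ← toForm_veronese, ← toForm_sum_smul,
    toForm_injective.eq_iff, eq_comm]

lemma waringRank_toForm (s : Fin (d + 1) → ℝ) :
    waringRank d (toForm d s) = additiveRank (powerCone ℝ d) s := by
  simp only [waringRank, additiveRank, hasWaringDecomp_toForm_iff]

end Forms

end BinaryWaring

open BinaryWaring

/-- The typical real Waring ranks of binary forms of degree d are exactly the
integers m with ⌊(d+2)/2⌋ ≤ m ≤ d: the set of forms of rank m has nonempty
interior for such m, and empty interior otherwise. -/
theorem stmt_18 (d : ℕ) (hd : 1 ≤ d) (m : ℕ) :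
    ((d + 2) / 2 ≤ m ∧ m ≤ d →
      (interior {a : Fin (d + 1) → ℝ |
        waringRank d (toForm d a) = m}).Nonempty) ∧
    (m < (d + 2) / 2 ∨ d < m →
      interior {a : Fin (d + 1) → ℝ |
        waringRank d (toForm d a) = m} = ∅) := by
  simp only [waringRank_toForm]
  have hd0 : d ≠ 0 := Nat.one_le_iff_ne_zero.mp hd
  refine ⟨fun ⟨hm, hmd⟩ => ?_, ?_⟩
  · obtain ⟨n, rfl⟩ : ∃ n, m = n + 1 := Nat.exists_eq_add_one.mpr (by omega)
    exact nonempty_interior_additiveRank_eq zero_mem_powerCone succ_nsmul_powerCone_eq_univ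
      (nsmul_powerCone_subset_closure_interior (by omega)) (not_dense_nsmul_powerCone hmd)
  · rintro (hm | hm)
    · rw [← Set.subset_empty_iff, ← interior_nsmul_powerCone_eq_empty (r := m) hd0 (by omega)]
      exact interior_mono (setOf_additiveRank_eq_subset_nsmul succ_nsmul_powerCone_eq_univ)
    · exact interior_additiveRank_eq_empty_of_dense (dense_nsmul_powerCone hd0) hm
end

section
/- Let f ∈ ℝ[x,y]_d have apolar ideal f^⊥ generated in generic degrees (degrees ((d+2)/2, (d+2)/2) for d even, ((d+1)/2, (d+3)/2) for d odd), and let m = rank f. If (f^⊥)_{m−1} contains a nonzero form s all of whose roots are real (s splits into real linear factors over ℝ), then every Euclidean neighborhood of f in ℝ[x,y]_d contains a form of real Waring rank at most m − 1; hence f is not a typical form of rank m. -/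
open MvPolynomial

/-- p is a nonzero constant times a product of m real linear forms. -/
def SplitsReal (m : ℕ) (p : MvPolynomial (Fin 2) ℝ) : Prop :=
  ∃ c : ℝ, c ≠ 0 ∧ ∃ a b : Fin m → ℝ, (∀ i, (a i, b i) ≠ (0, 0)) ∧
    p = c • ∏ i, lin (a i) (b i)

/-!
Write `s = ℓ₁ ⋯ ℓᵣ` with `ℓᵢ` real linear and let `Dᵢ` be the derivation attached to `ℓᵢ`. By
induction on `r`, a form killed by `D₁ ⋯ Dᵣ` is a limit of combinations of `r` powers of linear
forms. Indeed `D₁ f` is a limit of combinations of `r - 1` powers and, after moving the linear forms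
slightly, none of them is killed by `D₁`. Such a combination can be integrated termwise along `D₁`,
and a form in the kernel of `D₁` is a multiple of a single power, so all preimages under `D₁` are
combinations of `r` powers. Finally `D₁` maps forms of degree `n + 1` onto forms of degree `n`,
hence it is an open map and preimages commute with closures. Repeated factors of `s` need no
separate treatment.
-/

section DifferentialOperators

theorem pderiv_pderiv_comm {σ R : Type*} [CommSemiring R] (i j : σ) (f : MvPolynomial σ R) :
    pderiv i (pderiv j f) = pderiv j (pderiv i f) := by
  obtain rfl | hij := eq_or_ne i j
  · rfl
  · ext e
    simp only [coeff_pderiv, Finsupp.add_apply, Finsupp.single_eq_of_ne hij,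
      Finsupp.single_eq_of_ne hij.symm, add_zero, add_right_comm e]
    ring

/-- The `ℝ`-algebra homomorphism sending a polynomial `h` to the constant-coefficient differential
operator `h(∂₀, ∂₁)`. It makes the multiplicativity of `diffOp` in its first argument available. -/
noncomputable def diffOpHom :
    MvPolynomial (Fin 2) ℝ →ₐ[ℝ] Module.End ℝ (MvPolynomial (Fin 2) ℝ) :=
  AddMonoidAlgebra.lift ℝ _ _
    { toFun e := (pderiv 0).toLinearMap ^ e.toAdd 0 * (pderiv 1).toLinearMap ^ e.toAdd 1
      map_one' := by simp
      map_mul' e e' := by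
        have hcomm : Commute (pderiv (R := ℝ) (0 : Fin 2)).toLinearMap
            (pderiv (1 : Fin 2)).toLinearMap :=
          LinearMap.ext (pderiv_pderiv_comm 0 1)
        simp only [toAdd_mul, Finsupp.add_apply, pow_add]
        exact (hcomm.pow_pow _ _).mul_mul_mul_comm _ _ }

theorem diffOpHom_apply (h f : MvPolynomial (Fin 2) ℝ) : diffOpHom h f = diffOp h f := by
  simp only [diffOpHom, AddMonoidAlgebra.lift_apply, Finsupp.sum, diffOp, LinearMap.sum_apply]
  refine Finset.sum_congr rfl fun e _ => ?_
  simp only [MonoidHom.coe_mk, OneHom.coe_mk, LinearMap.smul_apply, Module.End.mul_apply,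
    Module.End.pow_apply]
  rfl

/-- The derivation `α ∂₀ + β ∂₁`, that is, the contraction by the linear form `lin α β`. -/
noncomputable def dirDeriv (α β : ℝ) :
    Derivation ℝ (MvPolynomial (Fin 2) ℝ) (MvPolynomial (Fin 2) ℝ) :=
  α • pderiv 0 + β • pderiv 1

theorem dirDeriv_apply (α β : ℝ) (f : MvPolynomial (Fin 2) ℝ) :
    dirDeriv α β f = α • pderiv 0 f + β • pderiv 1 f := rfl

theorem diffOpHom_lin_apply (α β : ℝ) (f : MvPolynomial (Fin 2) ℝ) :
    diffOpHom (lin α β) f = dirDeriv α β f := by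
  have diffOpHom_X (i : Fin 2) : diffOpHom (X i) = (pderiv i).toLinearMap := by
    fin_cases i <;> simp [diffOpHom, X, monomial]
  simp [lin, diffOpHom_X, dirDeriv_apply]

theorem dirDeriv_lin (α β p q : ℝ) : dirDeriv α β (lin p q) = C (α * p + β * q) := by
  simp [dirDeriv_apply, lin, smul_eq_C_mul, pderiv_X]

theorem dirDeriv_lin_pow (α β p q : ℝ) (n : ℕ) :
    dirDeriv α β (lin p q ^ (n + 1)) = ((n + 1) * (α * p + β * q)) • lin p q ^ n := by
  simp only [Derivation.leibniz_pow, dirDeriv_lin, add_tsub_cancel_right, nsmul_eq_mul,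
    smul_eq_mul, smul_eq_C_mul, C_mul, C_add, map_natCast, C_1, Nat.cast_add, Nat.cast_one]
  ring

theorem dirDeriv_comm (α β γ δ : ℝ) (f : MvPolynomial (Fin 2) ℝ) :
    dirDeriv α β (dirDeriv γ δ f) = dirDeriv γ δ (dirDeriv α β f) := by
  simp only [dirDeriv_apply, map_add, Derivation.map_smul, pderiv_pderiv_comm (1 : Fin 2) 0]
  module

theorem isHomogeneous_dirDeriv {n : ℕ} {f : MvPolynomial (Fin 2) ℝ}
    (hf : f.IsHomogeneous (n + 1)) (α β : ℝ) : (dirDeriv α β f).IsHomogeneous n :=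
  ((homogeneousSubmodule (Fin 2) ℝ n).smul_mem α hf.pderiv).add
    ((homogeneousSubmodule (Fin 2) ℝ n).smul_mem β hf.pderiv)

theorem euler_identity_orthogonal {n : ℕ} {f : MvPolynomial (Fin 2) ℝ} (hf : f.IsHomogeneous n)
    (α β : ℝ) :
    ((α ^ 2 + β ^ 2) * n) • f =
      lin (-β) α * dirDeriv (-β) α f + lin α β * dirDeriv α β f := by
  have euler : X 0 * pderiv 0 f + X 1 * pderiv 1 f = n • f := by
    rw [← hf.sum_X_mul_pderiv, Fin.sum_univ_two]
  rw [mul_smul, Nat.cast_smul_eq_nsmul, ← euler]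
  simp only [lin, dirDeriv_apply, smul_eq_C_mul, map_add, map_neg, map_pow]
  ring

theorem exists_eq_smul_lin_pow_of_dirDeriv_eq_zero {α β : ℝ} (hαβ : (α, β) ≠ (0, 0)) {n : ℕ}
    {f : MvPolynomial (Fin 2) ℝ} (hf : f.IsHomogeneous n) (hDf : dirDeriv α β f = 0) :
    ∃ c : ℝ, f = c • lin (-β) α ^ n := by
  induction n generalizing f with
  | zero =>
    refine ⟨coeff 0 f, ?_⟩
    rw [pow_zero, smul_eq_C_mul, mul_one]
    exact totalDegree_eq_zero_iff_eq_C.mp (Nat.le_zero.mp hf.totalDegree_le)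
  | succ n ih =>
    obtain ⟨c, hc⟩ := ih (isHomogeneous_dirDeriv hf (-β) α) (by rw [dirDeriv_comm, hDf, map_zero])
    have hnorm : (α ^ 2 + β ^ 2) * ((n + 1 : ℕ) : ℝ) ≠ 0 := by
      have : α ^ 2 + β ^ 2 ≠ 0 := fun h => hαβ (by ext <;> nlinarith)
      positivity
    refine ⟨((α ^ 2 + β ^ 2) * (n + 1 : ℕ))⁻¹ * c, ?_⟩
    rw [mul_smul, eq_inv_smul_iff₀ hnorm, euler_identity_orthogonal hf, hDf, hc, mul_zero, add_zero,
      mul_smul_comm, pow_succ']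

end DifferentialOperators

section Coordinates

theorem isHomogeneous_lin_pow (p q : ℝ) (n : ℕ) : (lin p q ^ n).IsHomogeneous n := by
  have hlin : (lin p q).IsHomogeneous 1 :=
    ((homogeneousSubmodule (Fin 2) ℝ 1).smul_mem p (isHomogeneous_X ℝ 0)).add
      ((homogeneousSubmodule (Fin 2) ℝ 1).smul_mem q (isHomogeneous_X ℝ 1))
  simpa only [one_mul] using hlin.pow n

theorem isHomogeneous_toForm (n : ℕ) (a : Fin (n + 1) → ℝ) : (toForm n a).IsHomogeneous n := by
  refine IsHomogeneous.sum _ _ _ fun i _ => (homogeneousSubmodule (Fin 2) ℝ n).smul_mem _ ?_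
  have := (isHomogeneous_X_pow (R := ℝ) (0 : Fin 2) i).mul (isHomogeneous_X_pow 1 (n - i))
  rwa [Nat.add_sub_cancel' (by omega)] at this

/-- The exponent vector of the monomial `X 0 ^ i * X 1 ^ (n - i)`. -/
noncomputable def formExponent (n i : ℕ) : Fin 2 →₀ ℕ :=
  Finsupp.single 0 i + Finsupp.single 1 (n - i)

theorem formExponent_inj {n i j : ℕ} : formExponent n i = formExponent n j ↔ i = j := by
  refine ⟨fun h => ?_, congrArg _⟩
  simpa [formExponent] using DFunLike.congr_fun h 0

theorem formExponent_degree_apply_zero (e : Fin 2 →₀ ℕ) : formExponent e.degree (e 0) = e := by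
  ext i
  fin_cases i <;> simp [formExponent, Finsupp.degree_eq_sum]

theorem coeff_toForm (n : ℕ) (a : Fin (n + 1) → ℝ) (i : Fin (n + 1)) :
    coeff (formExponent n i) (toForm n a) = a i := by
  have monomial_eq (j : ℕ) :
      X 0 ^ j * X 1 ^ (n - j) = monomial (R := ℝ) (formExponent n j) 1 := by
    simp only [X_pow_eq_monomial, monomial_mul, one_mul, formExponent]
  simp [toForm, coeff_sum, monomial_eq, coeff_monomial, formExponent_inj, Fin.val_inj]

theorem toForm_coeff {n : ℕ} {f : MvPolynomial (Fin 2) ℝ} (hf : f.IsHomogeneous n) :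
    toForm n (fun i => coeff (formExponent n i) f) = f := by
  ext e
  by_cases he : e.degree = n
  · subst he
    have hlt : e 0 < e.degree + 1 := Nat.lt_succ_of_le (Finsupp.le_degree 0 e)
    have := coeff_toForm e.degree (fun i => coeff (formExponent e.degree i) f) ⟨e 0, hlt⟩
    rwa [formExponent_degree_apply_zero] at this
  · rw [hf.coeff_eq_zero he, (isHomogeneous_toForm n _).coeff_eq_zero he]

/-- The coordinates `Fin (n + 1) → ℝ` of binary forms of degree `n`, through which the space of
forms is topologized; the forward map is `toForm n`. -/
noncomputable def formEquiv (n : ℕ) :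
    (Fin (n + 1) → ℝ) ≃ₗ[ℝ] homogeneousSubmodule (Fin 2) ℝ n where
  toFun a := ⟨toForm n a, isHomogeneous_toForm n a⟩
  map_add' a b := Subtype.ext <| by
    simp only [toForm, Pi.add_apply, add_smul, Finset.sum_add_distrib, Submodule.coe_add]
  map_smul' c a := Subtype.ext <| by
    simp only [toForm, Pi.smul_apply, smul_eq_mul, mul_smul, Finset.smul_sum, RingHom.id_apply,
      Submodule.coe_smul]
  invFun f i := coeff (formExponent n i) (f : MvPolynomial (Fin 2) ℝ)
  left_inv a := funext (coeff_toForm n a)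
  right_inv f := Subtype.ext (toForm_coeff f.2)

theorem coe_formEquiv (n : ℕ) (a : Fin (n + 1) → ℝ) :
    (formEquiv n a : MvPolynomial (Fin 2) ℝ) = toForm n a := rfl

theorem toForm_injective (n : ℕ) : Function.Injective (toForm n) :=
  Subtype.val_injective.comp (formEquiv n).injective

theorem finrank_homogeneousSubmodule_fin_two (n : ℕ) :
    Module.finrank ℝ (homogeneousSubmodule (Fin 2) ℝ n) = n + 1 := by
  rw [← (formEquiv n).finrank_eq, Module.finrank_fin_fun]

/-- The coefficient vector of `∑ j, c j • lin (v j).1 (v j).2 ^ n`. -/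
def powerSumCoeffs (n : ℕ) {r : ℕ} (c : Fin r → ℝ) (v : Fin r → ℝ × ℝ) : Fin (n + 1) → ℝ :=
  fun i => ∑ j, c j * (n.choose i * ((v j).1 ^ (i : ℕ) * (v j).2 ^ (n - i)))

theorem lin_pow_eq_toForm (n : ℕ) (p q : ℝ) :
    lin p q ^ n = toForm n fun i => n.choose i * (p ^ (i : ℕ) * q ^ (n - i)) := by
  rw [lin, add_pow, Finset.sum_range]
  refine Finset.sum_congr rfl fun i _ => ?_
  simp only [smul_eq_C_mul, C_mul, map_natCast, C_pow, mul_pow]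
  ring

theorem toForm_powerSumCoeffs (n : ℕ) {r : ℕ} (c : Fin r → ℝ) (v : Fin r → ℝ × ℝ) :
    toForm n (powerSumCoeffs n c v) = ∑ j, c j • lin (v j).1 (v j).2 ^ n := by
  simp only [lin_pow_eq_toForm, toForm, powerSumCoeffs, Finset.sum_smul, Finset.smul_sum, mul_smul]
  exact Finset.sum_comm

theorem continuous_powerSumCoeffs (n : ℕ) {r : ℕ} (c : Fin r → ℝ) :
    Continuous (powerSumCoeffs n c) := by
  unfold powerSumCoeffs
  fun_prop

end Coordinates

section Contraction

variable {α β : ℝ}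

/-- `dirDeriv α β` as a linear map from forms of degree `n + 1` to forms of degree `n`. -/
noncomputable def formDeriv (α β : ℝ) (n : ℕ) :
    homogeneousSubmodule (Fin 2) ℝ (n + 1) →ₗ[ℝ] homogeneousSubmodule (Fin 2) ℝ n :=
  (dirDeriv α β).toLinearMap.restrict fun _ hf => isHomogeneous_dirDeriv hf α β

theorem finrank_ker_formDeriv_le_one (hαβ : (α, β) ≠ (0, 0)) (n : ℕ) :
    Module.finrank ℝ (LinearMap.ker (formDeriv α β n)) ≤ 1 := by
  have hker : dirDeriv α β (lin (-β) α ^ (n + 1)) = 0 := by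
    rw [dirDeriv_lin_pow, show α * -β + β * α = 0 by ring, mul_zero, zero_smul]
  refine finrank_le_one ⟨⟨_, isHomogeneous_lin_pow _ _ _⟩, Subtype.ext hker⟩ fun f => ?_
  obtain ⟨c, hc⟩ := exists_eq_smul_lin_pow_of_dirDeriv_eq_zero hαβ f.1.2
    (congrArg Subtype.val (LinearMap.mem_ker.mp f.2))
  exact ⟨c, Subtype.ext (Subtype.ext hc.symm)⟩

theorem formDeriv_surjective (hαβ : (α, β) ≠ (0, 0)) (n : ℕ) :
    Function.Surjective (formDeriv α β n) := by
  have : FiniteDimensional ℝ (homogeneousSubmodule (Fin 2) ℝ n) := (formEquiv n).finiteDimensional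
  have : FiniteDimensional ℝ (homogeneousSubmodule (Fin 2) ℝ (n + 1)) :=
    (formEquiv (n + 1)).finiteDimensional
  have rank_nullity := (formDeriv α β n).finrank_range_add_finrank_ker
  have ker_le := finrank_ker_formDeriv_le_one hαβ n
  have range_le := (LinearMap.range (formDeriv α β n)).finrank_le
  rw [finrank_homogeneousSubmodule_fin_two] at rank_nullity range_le
  refine LinearMap.range_eq_top.mp (Submodule.eq_top_of_finrank_eq ?_)
  rw [finrank_homogeneousSubmodule_fin_two]
  omega

/-- `dirDeriv α β` read on coefficient vectors, that is, conjugated by `formEquiv`; it carries the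
topological argument, since polynomials themselves have no topology here. -/
noncomputable def coordDeriv (α β : ℝ) (n : ℕ) : (Fin (n + 2) → ℝ) →ₗ[ℝ] (Fin (n + 1) → ℝ) :=
  (formEquiv n).symm ∘ₗ formDeriv α β n ∘ₗ (formEquiv (n + 1)).toLinearMap

theorem toForm_coordDeriv (α β : ℝ) (n : ℕ) (a : Fin (n + 2) → ℝ) :
    toForm n (coordDeriv α β n a) = dirDeriv α β (toForm (n + 1) a) := by
  simp only [coordDeriv, ← coe_formEquiv, LinearMap.comp_apply, LinearEquiv.coe_coe,
    LinearEquiv.apply_symm_apply]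
  rfl

theorem isOpenMap_coordDeriv (hαβ : (α, β) ≠ (0, 0)) (n : ℕ) : IsOpenMap (coordDeriv α β n) :=
  LinearMap.isOpenMap_of_finiteDimensional _ <| (formEquiv n).symm.surjective.comp <|
    (formDeriv_surjective hαβ n).comp (formEquiv (n + 1)).surjective

end Contraction

section WaringLocus

variable {α β : ℝ}

/-- The coefficient vectors of forms of degree `n` that are combinations of `r` real `n`-th
powers. -/
def waringLocus (n r : ℕ) : Set (Fin (n + 1) → ℝ) := {a | hasWaringDecomp n r (toForm n a)}

/-- The part of `waringLocus n r` where no linear form of the decomposition is annihilated by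
`dirDeriv α β`. -/
def transversalLocus (α β : ℝ) (n r : ℕ) : Set (Fin (n + 1) → ℝ) :=
  {a | ∃ c p q : Fin r → ℝ, (∀ j, α * p j + β * q j ≠ 0) ∧
    toForm n a = ∑ j, c j • lin (p j) (q j) ^ n}

theorem hasWaringDecomp_zero (n r : ℕ) : hasWaringDecomp n r 0 := ⟨0, 0, 0, by simp⟩

theorem hasWaringDecomp.smul_lin_pow_add {n r : ℕ} {f : MvPolynomial (Fin 2) ℝ}
    (hf : hasWaringDecomp n r f) (c p q : ℝ) :
    hasWaringDecomp n (r + 1) (c • lin p q ^ n + f) := by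
  obtain ⟨c', p', q', rfl⟩ := hf
  exact ⟨Fin.cons c c', Fin.cons p p', Fin.cons q q', by simp [Fin.sum_univ_succ]⟩

theorem dense_setOf_linear_ne_zero (hαβ : (α, β) ≠ (0, 0)) :
    Dense {v : ℝ × ℝ | α * v.1 + β * v.2 ≠ 0} := by
  let φ : ℝ × ℝ →ₗ[ℝ] ℝ := α • LinearMap.fst ℝ ℝ ℝ + β • LinearMap.snd ℝ ℝ ℝ
  have hφ : φ ≠ 0 := fun h => hαβ <| by
    ext
    · simpa [φ] using DFunLike.congr_fun h (1, 0)
    · simpa [φ] using DFunLike.congr_fun h (0, 1)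
  exact (dense_compl_singleton 0).preimage
    (φ.isOpenMap_of_finiteDimensional (LinearMap.surjective hφ))

theorem waringLocus_subset_closure_transversalLocus (hαβ : (α, β) ≠ (0, 0)) (n r : ℕ) :
    waringLocus n r ⊆ closure (transversalLocus α β n r) := by
  rintro a ⟨c, p, q, ha⟩
  have ha' : powerSumCoeffs n c (fun j => (p j, q j)) = a :=
    toForm_injective n ((toForm_powerSumCoeffs n c _).trans ha.symm)
  have hdense : Dense {v : Fin r → ℝ × ℝ | ∀ j, α * (v j).1 + β * (v j).2 ≠ 0} := by
    simpa [Set.pi] using dense_pi Set.univ fun (_ : Fin r) _ => dense_setOf_linear_ne_zero hαβ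
  refine closure_mono ?_
    ((continuous_powerSumCoeffs n c).range_subset_closure_image_dense hdense ⟨_, ha'⟩)
  rintro _ ⟨v, hv, rfl⟩
  exact ⟨c, fun j => (v j).1, fun j => (v j).2, hv, toForm_powerSumCoeffs n c v⟩

theorem preimage_transversalLocus_subset (hαβ : (α, β) ≠ (0, 0)) (n r : ℕ) :
    coordDeriv α β n ⁻¹' transversalLocus α β n r ⊆ waringLocus (n + 1) (r + 1) := by
  rintro a ⟨c, p, q, hpq, ha⟩
  rw [toForm_coordDeriv] at ha
  set primitive : MvPolynomial (Fin 2) ℝ :=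
    ∑ j, (c j / ((n + 1) * (α * p j + β * q j))) • lin (p j) (q j) ^ (n + 1) with hprim
  have hderiv : dirDeriv α β primitive = dirDeriv α β (toForm (n + 1) a) := by
    rw [ha, hprim, map_sum]
    refine Finset.sum_congr rfl fun j _ => ?_
    have : (n + 1) * (α * p j + β * q j) ≠ 0 := mul_ne_zero n.cast_add_one_ne_zero (hpq j)
    rw [Derivation.map_smul, dirDeriv_lin_pow, smul_smul, div_mul_cancel₀ _ this]
  have hhom : primitive.IsHomogeneous (n + 1) :=
    IsHomogeneous.sum _ _ _ fun j _ => (homogeneousSubmodule (Fin 2) ℝ (n + 1)).smul_mem _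
      (isHomogeneous_lin_pow _ _ _)
  obtain ⟨c₀, hc₀⟩ := exists_eq_smul_lin_pow_of_dirDeriv_eq_zero hαβ
    ((isHomogeneous_toForm (n + 1) a).sub hhom) (by rw [map_sub, hderiv, sub_self])
  have hprimitive : hasWaringDecomp (n + 1) r primitive := ⟨_, p, q, hprim⟩
  have := hprimitive.smul_lin_pow_add c₀ (-β) α
  rwa [← hc₀, sub_add_cancel] at this

theorem mem_closure_waringLocus_of_coordDeriv_mem (hαβ : (α, β) ≠ (0, 0)) {n r : ℕ}
    {a : Fin (n + 2) → ℝ} (ha : coordDeriv α β n a ∈ closure (waringLocus n r)) :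
    a ∈ closure (waringLocus (n + 1) (r + 1)) := by
  have hclosure : coordDeriv α β n a ∈ closure (transversalLocus α β n r) :=
    closure_minimal (waringLocus_subset_closure_transversalLocus hαβ n r) isClosed_closure ha
  rw [← Set.mem_preimage, (isOpenMap_coordDeriv hαβ n).preimage_closure_eq_closure_preimage
    (coordDeriv α β n).continuous_of_finiteDimensional] at hclosure
  exact closure_mono (preimage_transversalLocus_subset hαβ n r) hclosure

theorem mem_waringLocus_degree_zero (r : ℕ) (a : Fin 1 → ℝ) : a ∈ waringLocus 0 (r + 1) := by
  have := (hasWaringDecomp_zero 0 r).smul_lin_pow_add (a 0) 0 0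
  simpa [waringLocus, toForm] using this

theorem mem_closure_waringLocus_of_diffOp_prod_lin_eq_zero {n r : ℕ} {α β : Fin r → ℝ}
    (hαβ : ∀ i, (α i, β i) ≠ (0, 0)) {a : Fin (n + 1) → ℝ}
    (ha : diffOp (∏ i, lin (α i) (β i)) (toForm n a) = 0) : a ∈ closure (waringLocus n r) := by
  rw [← diffOpHom_apply] at ha
  induction r generalizing n with
  | zero =>
    have ha : toForm n a = 0 := by simpa using ha
    have hzero : hasWaringDecomp n 0 (toForm n a) := ha ▸ hasWaringDecomp_zero n 0
    exact subset_closure hzero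
  | succ r ih =>
    cases n with
    | zero => exact subset_closure (mem_waringLocus_degree_zero r a)
    | succ n =>
      refine mem_closure_waringLocus_of_coordDeriv_mem (hαβ 0) (ih (fun i => hαβ i.succ) ?_)
      rwa [Fin.prod_univ_succ, mul_comm, map_mul, Module.End.mul_apply, diffOpHom_lin_apply,
        ← toForm_coordDeriv] at ha

end WaringLocus

theorem stmt_19_general {d r : ℕ} {a : Fin (d + 1) → ℝ} {s : MvPolynomial (Fin 2) ℝ}
    (hsperp : diffOp s (toForm d a) = 0) (hsplit : SplitsReal r s) :
    (∀ ε > (0 : ℝ), ∃ b : Fin (d + 1) → ℝ,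
      (∀ i, |b i - a i| < ε) ∧ waringRank d (toForm d b) ≤ r) ∧
    ∀ m > r, ¬∃ ε > (0 : ℝ), ∀ b : Fin (d + 1) → ℝ,
      (∀ i, |b i - a i| < ε) → waringRank d (toForm d b) = m := by
  obtain ⟨c, hc, α, β, hαβ, rfl⟩ := hsplit
  have hprod : diffOp (∏ i, lin (α i) (β i)) (toForm d a) = 0 := by
    rw [← diffOpHom_apply, map_smul, LinearMap.smul_apply, smul_eq_zero] at hsperp
    rw [← diffOpHom_apply]
    exact hsperp.resolve_left hc
  have hclosure := mem_closure_waringLocus_of_diffOp_prod_lin_eq_zero hαβ hprod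
  have hnear : ∀ ε > (0 : ℝ), ∃ b : Fin (d + 1) → ℝ,
      (∀ i, |b i - a i| < ε) ∧ waringRank d (toForm d b) ≤ r := fun ε hε => by
    obtain ⟨b, hb, hab⟩ := Metric.mem_closure_iff.mp hclosure ε hε
    rw [dist_comm, dist_pi_lt_iff hε] at hab
    exact ⟨b, hab, Nat.sInf_le hb⟩
  refine ⟨hnear, fun m hm ⟨ε, hε, hrank⟩ => ?_⟩
  obtain ⟨b, hab, hb⟩ := hnear ε hε
  exact hm.not_ge (hrank b hab ▸ hb)

/-- If f^⊥ is generated in generic degrees, m = rank f, and (f^⊥)_{m-1}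
contains a nonzero form splitting into real linear factors, then every
neighborhood of f contains a form of rank ≤ m - 1; hence f is not a typical
form of rank m. -/
theorem stmt_19 (d : ℕ) (hd : 1 ≤ d) (a : Fin (d + 1) → ℝ)
    (hf0 : toForm d a ≠ 0)
    (g₁ g₂ : MvPolynomial (Fin 2) ℝ)
    (hg₁ : g₁.IsHomogeneous ((d + 2) / 2))
    (hg₂ : g₂.IsHomogeneous (d + 2 - (d + 2) / 2))
    (hgen : ∀ h : MvPolynomial (Fin 2) ℝ,
      diffOp h (toForm d a) = 0 ↔ h ∈ Ideal.span {g₁, g₂})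
    (m : ℕ) (hm : m = waringRank d (toForm d a)) (hm1 : 1 ≤ m)
    (s : MvPolynomial (Fin 2) ℝ) (hs0 : s ≠ 0)
    (hsm : s.IsHomogeneous (m - 1)) (hsperp : diffOp s (toForm d a) = 0)
    (hsplit : SplitsReal (m - 1) s) :
    (∀ ε > (0 : ℝ), ∃ b : Fin (d + 1) → ℝ,
      (∀ i, |b i - a i| < ε) ∧ waringRank d (toForm d b) ≤ m - 1) ∧
    ¬∃ ε > (0 : ℝ), ∀ b : Fin (d + 1) → ℝ,
      (∀ i, |b i - a i| < ε) → waringRank d (toForm d b) = m :=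
  have ⟨hnear, hnot_typical⟩ := stmt_19_general hsperp hsplit
  ⟨hnear, hnot_typical m (by omega)⟩
end
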